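/- arXiv:1910.09539 — 5 statements merged into one kernel-verified Lean document; each statement's English description precedes it below -/
import Mathlib

section
/- Suppose additionally that c > 0 and |K_l(t)| ≤ c(l+1) for all 0 ≤ l ≤ N′−1 and all t. Then for every positive integer n and every t, (d/dt) E_{s,t}[lⁿ] ≤ 4cn(1+e)·( E_{s,t}[lⁿ] + (en)ⁿ ); and in the special case n = 1 the stronger inequality (d/dt) E_{s,t}[l] ≤ c·( 2·E_{s,t}[l] + 1 ) holds. -/
theorem aux_telescope (k f : ℕ → ℝ) (w : ℕ → ℝ) (M : ℕ) :
    ∑ l ∈ Finset.range (M + 1), w l * (2 * f l *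
      ((if l = 0 then 0 else k (l - 1) * f (l - 1)) - k l * f (l + 1))) =
    ∑ l ∈ Finset.range M, 2 * k l * (f l * f (l + 1)) * (w (l + 1) - w l)
      - 2 * w M * k M * f M * f (M + 1) := by
  induction M with
  | zero => simp; ring
  | succ M ih =>
    rw [Finset.sum_range_succ, ih, Finset.sum_range_succ]
    simp
    ring

theorem aux_pow (a : ℝ) (ha : 0 ≤ a) (n : ℕ) :
    (a + 1) * ((a + 1) ^ n - a ^ n) ≤ n * (a + 1) ^ n := by
  induction n with
  | zero => simp
  | succ n ih =>
    have h1 : a ^ n ≤ (a + 1) ^ n := pow_le_pow_left₀ ha (by linarith) n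
    have h2 := mul_le_mul_of_nonneg_left ih (by linarith : (0:ℝ) ≤ a + 1)
    have h3 := mul_le_mul_of_nonneg_left h1 (by linarith : (0:ℝ) ≤ a + 1)
    push_cast
    rw [pow_succ, pow_succ]
    nlinarith

theorem aux_exp (l n : ℕ) (hn : 0 < n) :
    ((l : ℝ) + 1) ^ n ≤ Real.exp 1 * (l : ℝ) ^ n + (Real.exp 1 * n) ^ n := by
  have he : (1 : ℝ) ≤ Real.exp 1 := Real.one_le_exp (by norm_num)
  have hn0 : (0 : ℝ) < n := by exact_mod_cast hn
  rcases lt_or_ge l n with h | h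
  · have h1 : (l : ℝ) + 1 ≤ n := by exact_mod_cast h
    have h2 : ((l : ℝ) + 1) ^ n ≤ (Real.exp 1 * n) ^ n :=
      pow_le_pow_left₀ (by positivity) (by nlinarith) n
    have : 0 ≤ Real.exp 1 * (l : ℝ) ^ n := by positivity
    linarith
  · have hl : (n : ℝ) ≤ l := by exact_mod_cast h
    have hl0 : (0 : ℝ) < l := by linarith
    have h1 : (l : ℝ) + 1 ≤ Real.exp (1 / l) * l := by
      have := Real.add_one_le_exp (1 / (l : ℝ))
      have h2 := mul_le_mul_of_nonneg_right this hl0.le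
      have h3 : (1 / (l : ℝ) + 1) * l = l + 1 := by field_simp; ring
      linarith
    have h2 : ((l : ℝ) + 1) ^ n ≤ (Real.exp (1 / l) * l) ^ n :=
      pow_le_pow_left₀ (by positivity) h1 n
    have h3 : Real.exp (1 / l) ^ n ≤ Real.exp 1 := by
      rw [← Real.exp_nat_mul]
      apply Real.exp_le_exp.mpr
      rw [mul_one_div, div_le_one hl0]
      exact hl
    rw [mul_pow] at h2
    have h4 := mul_le_mul_of_nonneg_right h3 (by positivity : (0:ℝ) ≤ (l:ℝ) ^ n)
    have : 0 ≤ (Real.exp 1 * n) ^ n := by positivity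
    linarith

theorem aux_main (N' : ℕ) (K : ℕ → ℝ → ℝ) (φ : ℕ → ℝ → ℝ)
    (hKtop : ∀ t : ℝ, K N' t = 0)
    (hODE : ∀ l ≤ N', ∀ t : ℝ, HasDerivAt (φ l)
      ((if l = 0 then 0 else K (l - 1) t * φ (l - 1) t) - K l t * φ (l + 1) t) t)
    (c : ℝ) (hc : 0 < c)
    (hK : ∀ l < N', ∀ t : ℝ, |K l t| ≤ c * (l + 1)) (n : ℕ) (hn : 0 < n) (t : ℝ) :
    deriv (fun τ : ℝ => ∑ l ∈ Finset.range (N' + 1), (l : ℝ) ^ n * (φ l τ) ^ 2) t ≤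
      c * n * (∑ l ∈ Finset.range (N' + 1), ((l : ℝ) + 1) ^ n * (φ l t) ^ 2 +
        ∑ l ∈ Finset.range (N' + 1), (l : ℝ) ^ n * (φ l t) ^ 2) := by
  have hd : HasDerivAt (fun τ : ℝ => ∑ l ∈ Finset.range (N' + 1), (l : ℝ) ^ n * (φ l τ) ^ 2)
      (∑ l ∈ Finset.range (N' + 1), (l : ℝ) ^ n * (2 * φ l t *
        ((if l = 0 then 0 else K (l - 1) t * φ (l - 1) t) - K l t * φ (l + 1) t))) t := by
    apply HasDerivAt.fun_sum
    intro l hl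
    have := ((hODE l (Nat.lt_succ_iff.mp (Finset.mem_range.mp hl)) t).fun_pow 2).const_mul
      ((l : ℝ) ^ n)
    simpa using this
  rw [hd.deriv, aux_telescope (fun l => K l t) (fun l => φ l t) (fun l => (l : ℝ) ^ n) N']
  simp only [hKtop, mul_zero, zero_mul, sub_zero]
  have h1 : ∀ l ∈ Finset.range N', 2 * K l t * (φ l t * φ (l + 1) t) *
      (((l + 1 : ℕ) : ℝ) ^ n - (l : ℝ) ^ n) ≤
      c * n * (((l : ℝ) + 1) ^ n * (φ l t) ^ 2 +
        ((l + 1 : ℕ) : ℝ) ^ n * (φ (l + 1) t) ^ 2) := by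
    intro l hl
    have hk := hK l (Finset.mem_range.mp hl) t
    push_cast
    have hp := aux_pow l (Nat.cast_nonneg l) n
    have hD : 0 ≤ ((l : ℝ) + 1) ^ n - (l : ℝ) ^ n :=
      sub_nonneg.mpr (pow_le_pow_left₀ (Nat.cast_nonneg l) (by linarith) n)
    have hA : 2 * K l t * (φ l t * φ (l + 1) t) ≤
        (c * (l + 1)) * ((φ l t) ^ 2 + (φ (l + 1) t) ^ 2) := by
      have h2 : 2 * |φ l t * φ (l + 1) t| ≤ (φ l t) ^ 2 + (φ (l + 1) t) ^ 2 := by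
        rw [abs_mul, ← sq_abs (φ l t), ← sq_abs (φ (l + 1) t)]
        nlinarith [sq_nonneg (|φ l t| - |φ (l + 1) t|)]
      calc 2 * K l t * (φ l t * φ (l + 1) t) ≤ |K l t| * (2 * |φ l t * φ (l + 1) t|) := by
            have := le_abs_self (K l t * (φ l t * φ (l + 1) t))
            rw [abs_mul] at this
            linarith
        _ ≤ _ := mul_le_mul hk h2 (by positivity) (by positivity)
    calc _ ≤ (c * (l + 1)) * ((φ l t) ^ 2 + (φ (l + 1) t) ^ 2) *
          (((l : ℝ) + 1) ^ n - (l : ℝ) ^ n) := mul_le_mul_of_nonneg_right hA hD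
      _ = c * ((φ l t) ^ 2 + (φ (l + 1) t) ^ 2) *
          (((l : ℝ) + 1) * (((l : ℝ) + 1) ^ n - (l : ℝ) ^ n)) := by ring
      _ ≤ c * ((φ l t) ^ 2 + (φ (l + 1) t) ^ 2) * (n * ((l : ℝ) + 1) ^ n) :=
          mul_le_mul_of_nonneg_left hp (by positivity)
      _ = _ := by ring
  refine (Finset.sum_le_sum h1).trans ?_
  rw [← Finset.mul_sum, Finset.sum_add_distrib]
  apply mul_le_mul_of_nonneg_left _ (by positivity)
  apply add_le_add
  · rw [Finset.sum_range_succ]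
    have : 0 ≤ ((N' : ℝ) + 1) ^ n * (φ N' t) ^ 2 := by positivity
    linarith
  · rw [Finset.sum_range_succ' _ N']
    have : 0 ≤ ((0 : ℕ) : ℝ) ^ n * (φ 0 t) ^ 2 := by positivity
    linarith

/-- Moment growth: if `|K_l(t)| ≤ c(l+1)` for all `0 ≤ l ≤ N′−1`, then for every `n ≥ 1`,
`(d/dt) E_{s,t}[lⁿ] ≤ 4cn(1+e)(E_{s,t}[lⁿ] + (en)ⁿ)`, and for `n = 1` the stronger bound
`(d/dt) E_{s,t}[l] ≤ c(2 E_{s,t}[l] + 1)` holds. -/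
theorem moment_derivative_bound (N' : ℕ) (hN' : 0 < N') (K : ℕ → ℝ → ℝ) (φ : ℕ → ℝ → ℝ)
    (hKcont : ∀ l, Continuous (K l))
    (hKtop : ∀ t : ℝ, K N' t = 0)
    (hODE : ∀ l ≤ N', ∀ t : ℝ, HasDerivAt (φ l)
      ((if l = 0 then 0 else K (l - 1) t * φ (l - 1) t) - K l t * φ (l + 1) t) t)
    (hinit0 : φ 0 0 = 1) (hinit : ∀ l, 0 < l → φ l 0 = 0)
    (hnorm : ∀ t : ℝ, ∑ l ∈ Finset.range (N' + 1), (φ l t) ^ 2 = 1)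
    (c : ℝ) (hc : 0 < c)
    (hK : ∀ l < N', ∀ t : ℝ, |K l t| ≤ c * (l + 1)) :
    (∀ n : ℕ, 0 < n → ∀ t : ℝ,
      deriv (fun τ : ℝ => ∑ l ∈ Finset.range (N' + 1), (l : ℝ) ^ n * (φ l τ) ^ 2) t ≤
        4 * c * n * (1 + Real.exp 1) *
          ((∑ l ∈ Finset.range (N' + 1), (l : ℝ) ^ n * (φ l t) ^ 2) + (Real.exp 1 * n) ^ n)) ∧
    (∀ t : ℝ,
      deriv (fun τ : ℝ => ∑ l ∈ Finset.range (N' + 1), (l : ℝ) * (φ l τ) ^ 2) t ≤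
        c * (2 * (∑ l ∈ Finset.range (N' + 1), (l : ℝ) * (φ l t) ^ 2) + 1)) := by
  constructor
  · intro n hn t
    refine (aux_main N' K φ hKtop hODE c hc hK n hn t).trans ?_
    have h1 : ∑ l ∈ Finset.range (N' + 1), ((l : ℝ) + 1) ^ n * (φ l t) ^ 2 ≤
        Real.exp 1 * (∑ l ∈ Finset.range (N' + 1), (l : ℝ) ^ n * (φ l t) ^ 2) +
          (Real.exp 1 * n) ^ n := by
      calc _ ≤ ∑ l ∈ Finset.range (N' + 1), (Real.exp 1 * ((l : ℝ) ^ n * (φ l t) ^ 2) +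
            (Real.exp 1 * n) ^ n * (φ l t) ^ 2) := by
            apply Finset.sum_le_sum
            intro l _
            have := mul_le_mul_of_nonneg_right (aux_exp l n hn) (sq_nonneg (φ l t))
            linarith
        _ = _ := by
            rw [Finset.sum_add_distrib, ← Finset.mul_sum, ← Finset.mul_sum, hnorm t, mul_one]
    have hE : 0 ≤ ∑ l ∈ Finset.range (N' + 1), (l : ℝ) ^ n * (φ l t) ^ 2 :=
      Finset.sum_nonneg fun l _ => by positivity
    generalize (∑ l ∈ Finset.range (N' + 1), (l : ℝ) ^ n * (φ l t) ^ 2) = E at *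
    have hX : 0 ≤ (Real.exp 1 * n) ^ n := by positivity
    generalize (Real.exp 1 * n) ^ n = X at *
    have he : 0 < Real.exp 1 := Real.exp_pos 1
    generalize Real.exp 1 = e at *
    have h2 : ∑ l ∈ Finset.range (N' + 1), ((l : ℝ) + 1) ^ n * (φ l t) ^ 2 + E ≤
        4 * (1 + e) * (E + X) := by
      nlinarith [mul_nonneg he.le hE, mul_nonneg he.le hX]
    have h3 := mul_le_mul_of_nonneg_left h2 (by positivity : 0 ≤ c * n)
    linarith
  · intro t
    have h := aux_main N' K φ hKtop hODE c hc hK 1 one_pos t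
    simp only [pow_one, Nat.cast_one, mul_one, add_mul, one_mul, Finset.sum_add_distrib,
      hnorm t] at h
    linarith
end

section
/- Suppose additionally that c > 0 and |K_l(t)| ≤ c(l+1) for all 0 ≤ l ≤ N′−1 and all t. Then for every positive integer n and every t ≥ 0, the n-th moment of the block-size distribution satisfies E_{s,t}[lⁿ] ≤ (en)ⁿ·( e^{4c(1+e)nt} − 1 ). -/
lemma aux_diff (y : ℝ) (hy : 0 ≤ y) (n : ℕ) :
    (y + 1) * ((y + 1) ^ n - y ^ n) ≤ n * (y + 1) ^ n := by
  induction n with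
  | zero => simp
  | succ n ih =>
    have h1 : y ^ n ≤ (y + 1) ^ n := pow_le_pow_left₀ hy (by linarith) n
    have h2 := mul_le_mul_of_nonneg_left ih (by linarith : 0 ≤ y + 1)
    have h3 := mul_le_mul_of_nonneg_left h1 (by linarith : 0 ≤ y + 1)
    push_cast
    rw [pow_succ, pow_succ]
    nlinarith

lemma aux_pow_s10 (l n : ℕ) (hn : 0 < n) :
    ((l : ℝ) + 1) ^ n ≤ Real.exp 1 * (l : ℝ) ^ n + (n : ℝ) ^ n := by
  have he := Real.exp_pos 1
  rcases lt_or_ge l n with h | h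
  · have h1 : ((l : ℝ) + 1) ^ n ≤ (n : ℝ) ^ n := by
      apply pow_le_pow_left₀ (by positivity)
      exact_mod_cast h
    have : 0 ≤ Real.exp 1 * (l : ℝ) ^ n := by positivity
    linarith
  · have hl : (0 : ℝ) < l := by exact_mod_cast lt_of_lt_of_le hn h
    have h0 : (l : ℝ) + 1 ≤ l * Real.exp (1 / l) := by
      have := Real.add_one_le_exp (1 / (l : ℝ))
      calc (l : ℝ) + 1 = l * (1 / l + 1) := by field_simp; ring
        _ ≤ _ := by gcongr
    have h1 : ((l : ℝ) + 1) ^ n ≤ (l * Real.exp (1 / l)) ^ n :=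
      pow_le_pow_left₀ (by positivity) h0 n
    rw [mul_pow, ← Real.exp_nat_mul] at h1
    have h2 : Real.exp (n * (1 / (l : ℝ))) ≤ Real.exp 1 := by
      apply Real.exp_le_exp.2
      rw [mul_one_div, div_le_one hl]
      exact_mod_cast h
    have h3 := mul_le_mul_of_nonneg_left h2 (by positivity : 0 ≤ (l : ℝ) ^ n)
    have : 0 ≤ (n : ℝ) ^ n := by positivity
    linarith

lemma aux_parts (f p k : ℕ → ℝ) (m : ℕ) :
    ∑ l ∈ Finset.range (m + 1),
      f l * (2 * p l * ((if l = 0 then 0 else k (l - 1) * p (l - 1)) - k l * p (l + 1))) =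
    ∑ l ∈ Finset.range m, 2 * ((f (l + 1) - f l) * k l * (p l * p (l + 1)))
      - 2 * f m * k m * (p m * p (m + 1)) := by
  induction m with
  | zero => simp; ring
  | succ m ih =>
    rw [Finset.sum_range_succ, ih, Finset.sum_range_succ _ m]
    simp
    ring

lemma aux_bound (N : ℕ) (p k : ℕ → ℝ) (c : ℝ) (hc : 0 < c) (n : ℕ) (hn : 0 < n)
    (hk : ∀ l < N, |k l| ≤ c * (l + 1)) (hp : ∑ l ∈ Finset.range (N + 1), p l ^ 2 = 1) :
    ∑ l ∈ Finset.range N,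
      2 * ((((l + 1 : ℕ) : ℝ) ^ n - (l : ℝ) ^ n) * k l * (p l * p (l + 1))) ≤
    c * n * ((1 + Real.exp 1) * ∑ l ∈ Finset.range (N + 1), (l : ℝ) ^ n * p l ^ 2
      + (n : ℝ) ^ n) := by
  have h1 : ∀ l ∈ Finset.range N,
      2 * ((((l + 1 : ℕ) : ℝ) ^ n - (l : ℝ) ^ n) * k l * (p l * p (l + 1))) ≤
      c * n * (((l : ℝ) + 1) ^ n * p l ^ 2 + ((l + 1 : ℕ) : ℝ) ^ n * p (l + 1) ^ 2) := by
    intro l hl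
    have hkl := hk l (Finset.mem_range.1 hl)
    push_cast
    have hd := aux_diff (l : ℝ) (by positivity) n
    have hd0 : 0 ≤ ((l : ℝ) + 1) ^ n - (l : ℝ) ^ n :=
      sub_nonneg.2 (pow_le_pow_left₀ (by positivity) (by linarith) n)
    have hpp : 2 * |p l * p (l + 1)| ≤ p l ^ 2 + p (l + 1) ^ 2 := by
      rw [abs_mul, ← sq_abs (p l), ← sq_abs (p (l + 1))]
      nlinarith [sq_nonneg (|p l| - |p (l + 1)|)]
    calc 2 * ((((l : ℝ) + 1) ^ n - (l : ℝ) ^ n) * k l * (p l * p (l + 1)))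
        ≤ |2 * ((((l : ℝ) + 1) ^ n - (l : ℝ) ^ n) * k l * (p l * p (l + 1)))| := le_abs_self _
      _ = (((l : ℝ) + 1) ^ n - (l : ℝ) ^ n) * |k l| * (2 * |p l * p (l + 1)|) := by
          rw [abs_mul, abs_mul, abs_mul, abs_of_nonneg hd0, abs_two]; ring
      _ ≤ (((l : ℝ) + 1) ^ n - (l : ℝ) ^ n) * (c * (l + 1)) * (p l ^ 2 + p (l + 1) ^ 2) := by
          gcongr
      _ = c * ((l + 1) * (((l : ℝ) + 1) ^ n - (l : ℝ) ^ n)) * (p l ^ 2 + p (l + 1) ^ 2) := by ring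
      _ ≤ c * (n * ((l : ℝ) + 1) ^ n) * (p l ^ 2 + p (l + 1) ^ 2) := by gcongr
      _ = _ := by ring
  refine (Finset.sum_le_sum h1).trans ?_
  rw [← Finset.mul_sum, Finset.sum_add_distrib]
  have h2 : ∑ l ∈ Finset.range N, ((l + 1 : ℕ) : ℝ) ^ n * p (l + 1) ^ 2 =
      ∑ l ∈ Finset.range (N + 1), (l : ℝ) ^ n * p l ^ 2 := by
    rw [Finset.sum_range_succ' _ N]
    simp [hn.ne']
  have h3 : ∑ l ∈ Finset.range N, ((l : ℝ) + 1) ^ n * p l ^ 2 ≤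
      Real.exp 1 * ∑ l ∈ Finset.range (N + 1), (l : ℝ) ^ n * p l ^ 2 + (n : ℝ) ^ n := by
    calc ∑ l ∈ Finset.range N, ((l : ℝ) + 1) ^ n * p l ^ 2
        ≤ ∑ l ∈ Finset.range (N + 1), ((l : ℝ) + 1) ^ n * p l ^ 2 := by
          rw [Finset.sum_range_succ]
          have : 0 ≤ ((N : ℝ) + 1) ^ n * p N ^ 2 := by positivity
          linarith
      _ ≤ ∑ l ∈ Finset.range (N + 1),
          (Real.exp 1 * ((l : ℝ) ^ n * p l ^ 2) + (n : ℝ) ^ n * p l ^ 2) := by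
          apply Finset.sum_le_sum
          intro l _
          have := mul_le_mul_of_nonneg_right (aux_pow_s10 l n hn) (sq_nonneg (p l))
          linarith
      _ = _ := by
          rw [Finset.sum_add_distrib, ← Finset.mul_sum, ← Finset.mul_sum, hp, mul_one]
  rw [h2]
  apply mul_le_mul_of_nonneg_left _ (by positivity)
  linarith


/-- Moment bound: if `|K_l(t)| ≤ c(l+1)` for all `0 ≤ l ≤ N′−1`, then for every `n ≥ 1` and
`t ≥ 0`, `E_{s,t}[lⁿ] ≤ (en)ⁿ (e^{4c(1+e)nt} − 1)`. -/
theorem moment_bound (N' : ℕ) (hN' : 0 < N') (K : ℕ → ℝ → ℝ) (φ : ℕ → ℝ → ℝ)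
    (hKcont : ∀ l, Continuous (K l))
    (hKtop : ∀ t : ℝ, K N' t = 0)
    (hODE : ∀ l ≤ N', ∀ t : ℝ, HasDerivAt (φ l)
      ((if l = 0 then 0 else K (l - 1) t * φ (l - 1) t) - K l t * φ (l + 1) t) t)
    (hinit0 : φ 0 0 = 1) (hinit : ∀ l, 0 < l → φ l 0 = 0)
    (hnorm : ∀ t : ℝ, ∑ l ∈ Finset.range (N' + 1), (φ l t) ^ 2 = 1)
    (c : ℝ) (hc : 0 < c)
    (hK : ∀ l < N', ∀ t : ℝ, |K l t| ≤ c * (l + 1)) :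
    ∀ n : ℕ, 0 < n → ∀ t : ℝ, 0 ≤ t →
      ∑ l ∈ Finset.range (N' + 1), (l : ℝ) ^ n * (φ l t) ^ 2 ≤
        (Real.exp 1 * n) ^ n * (Real.exp (4 * c * (1 + Real.exp 1) * n * t) - 1) := by
  intro n hn t ht
  set A : ℝ := 4 * c * (1 + Real.exp 1) * n with hA
  set B : ℝ := (Real.exp 1 * n) ^ n with hB
  have he : 1 ≤ Real.exp 1 := Real.one_le_exp (by norm_num)
  have hn0 : (0 : ℝ) < n := by exact_mod_cast hn
  have hBn : (n : ℝ) ^ n ≤ B := pow_le_pow_left₀ hn0.le (by nlinarith) n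
  have hn1 : (0 : ℝ) ≤ (n : ℝ) ^ n := by positivity
  let M : ℝ → ℝ := fun t => ∑ l ∈ Finset.range (N' + 1), (l : ℝ) ^ n * (φ l t) ^ 2
  let D : ℝ → ℝ := fun t => ∑ l ∈ Finset.range (N' + 1), (l : ℝ) ^ n * (2 * φ l t *
    ((if l = 0 then 0 else K (l - 1) t * φ (l - 1) t) - K l t * φ (l + 1) t))
  have hM : ∀ s, HasDerivAt M (D s) s := by
    intro s
    apply HasDerivAt.fun_sum
    intro l hl
    have h := ((hODE l (by simpa [Nat.lt_succ_iff] using hl) s).pow 2).const_mul ((l : ℝ) ^ n)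
    simpa using h
  have hM0 : ∀ s, 0 ≤ M s := fun s => Finset.sum_nonneg fun l _ => by positivity
  have hD : ∀ s, D s ≤ A * (M s + B) := by
    intro s
    have h1 := aux_parts (fun l => (l : ℝ) ^ n) (fun l => φ l s) (fun l => K l s) N'
    have h2 := aux_bound N' (fun l => φ l s) (fun l => K l s) c hc n hn
      (fun l hl => hK l hl s) (hnorm s)
    simp only [hKtop, mul_zero, zero_mul, sub_zero] at h1
    have h3 : D s ≤ c * n * ((1 + Real.exp 1) * M s + (n : ℝ) ^ n) := h1.le.trans h2
    refine h3.trans ?_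
    have h4 : A * (M s + B) = c * n * ((1 + Real.exp 1) * (4 * M s) + 4 * (1 + Real.exp 1) * B) := by
      rw [hA]; ring
    rw [h4]
    apply mul_le_mul_of_nonneg_left _ (by positivity)
    have := hM0 s
    have : (1 + Real.exp 1) * M s ≤ (1 + Real.exp 1) * (4 * M s) := by gcongr; linarith
    nlinarith
  have hH : ∀ s, HasDerivAt (fun s => (M s + B) * Real.exp (-(A * s)))
      (D s * Real.exp (-(A * s)) + (M s + B) * (Real.exp (-(A * s)) * (-(A * 1)))) s := by
    intro s
    exact ((hM s).add_const B).mul ((((hasDerivAt_id s).const_mul A).neg).exp)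
  have hanti : Antitone (fun s => (M s + B) * Real.exp (-(A * s))) := by
    apply antitone_of_deriv_nonpos (fun s => (hH s).differentiableAt)
    intro s
    rw [(hH s).deriv]
    have := mul_le_mul_of_nonneg_right (hD s) (Real.exp_pos (-(A * s))).le
    linarith
  have h := hanti ht
  have hM00 : M 0 = 0 := by
    apply Finset.sum_eq_zero
    intro l _
    rcases Nat.eq_zero_or_pos l with rfl | hl
    · simp [hn.ne']
    · simp [hinit l hl]
  simp only [hM00, mul_zero, neg_zero, Real.exp_zero, zero_add, mul_one] at h
  rw [Real.exp_neg, ← div_eq_mul_inv, div_le_iff₀ (Real.exp_pos _)] at h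
  change M t ≤ _
  linarith
end

section
/- Suppose additionally that M is a positive integer with M < N′, c > 0, and |K_l(t)| ≤ c(l+1) for all l ≤ M and all t. Then for every t ≥ 0, the probability of the walk being beyond site M satisfies (d/dt) Σ_{l=M+1}^{N′} P_l(t) ≤ 2e·c²·(M+1)·t·exp( −M·e^{−2−4c(1+e)t} ). -/
theorem aux_num (s r t u p : ℝ) (M : ℕ) (hM : 0 < M) (hs : 0 < s)
    (hr : r ≤ 1/4) (hr2 : r ≤ Real.exp (-4 * s))
    (ht : t = Real.sinh s / Real.cosh s) (hu : u = Real.sinh (2*s) / Real.cosh (2*s))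
    (hp : p * t ≤ u ^ (2 * M + 2)) : p ≤ Real.exp 1 * s * Real.exp (-(M : ℝ) * r) := by
  have hsh : 0 < Real.sinh s := Real.sinh_pos_iff.2 hs
  have hch : 0 < Real.cosh s := Real.cosh_pos s
  have htp : 0 < t := by rw [ht]; positivity
  have hch2 : 0 < Real.cosh (2*s) := Real.cosh_pos _
  have hts : t ≤ s := by
    have hd : Monotone (fun x : ℝ => x * Real.cosh x - Real.sinh x) := by
      have hdv : ∀ x : ℝ, HasDerivAt (fun x : ℝ => x * Real.cosh x - Real.sinh x)
          (x * Real.sinh x) x := by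
        intro x
        refine (((hasDerivAt_id x).mul (Real.hasDerivAt_cosh x)).sub
          (Real.hasDerivAt_sinh x)).congr_deriv ?_
        simp
      apply monotone_of_deriv_nonneg (fun x => (hdv x).differentiableAt)
      intro x
      rw [(hdv x).deriv]
      rcases le_total 0 x with h | h
      · exact mul_nonneg h (Real.sinh_nonneg_iff.2 h)
      · exact mul_nonneg_of_nonpos_of_nonpos h (Real.sinh_nonpos_iff.2 h)
    rw [ht, div_le_iff₀ hch]
    have := hd hs.le
    simp at this
    linarith
  have hut : u = 2 * t / (1 + t^2) := by
    rw [hu, ht, Real.sinh_two_mul, Real.cosh_two_mul]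
    field_simp
  have hu2 : u^2 ≤ Real.exp (-r) := by
    have h1 : u^2 = 1 - 1 / Real.cosh (2*s)^2 := by
      rw [hu]
      have := Real.cosh_sq (2*s)
      field_simp
      linarith
    have h2 : Real.cosh (2*s) ≤ Real.exp (2*s) := by
      rw [Real.cosh_eq]
      have : Real.exp (-(2*s)) ≤ Real.exp (2*s) := Real.exp_le_exp.2 (by linarith)
      linarith
    have h3 : Real.exp (-4*s) ≤ 1 / Real.cosh (2*s)^2 := by
      rw [show -4*s = -(2*s+2*s) by ring, Real.exp_neg, Real.exp_add, ← one_div]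
      apply one_div_le_one_div_of_le (by positivity)
      nlinarith
    have h4 := Real.add_one_le_exp (-r)
    linarith
  have hu4 : u^4 * Real.exp r ≤ Real.exp 1 * t^2 := by
    have h1 : Real.exp r ≤ Real.exp 1 * (16/27) := by
      have h5 : (27/16 : ℝ) ≤ Real.exp (1 - r) := by
        have := Real.add_one_le_exp (1 - r)
        linarith
      have h6 : Real.exp 1 = Real.exp (1-r) * Real.exp r := by
        rw [← Real.exp_add]; congr 1; ring
      rw [h6]
      nlinarith [Real.exp_pos r]
    have h2 : u^4 * (16/27) ≤ t^2 := by
      rw [hut, div_pow, div_mul_eq_mul_div, div_le_iff₀ (by positivity)]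
      have : 256/27 * t^2 ≤ (1+t^2)^4 := by
        have : (1+t^2)^4 - 256/27*t^2 = (t^2-1/3)^2*(t^4+14/3*t^2+9) := by ring
        have : 0 ≤ (t^2-1/3)^2*(t^4+14/3*t^2+9) := by positivity
        linarith
      nlinarith [sq_nonneg t]
    calc u^4 * Real.exp r ≤ u^4 * (Real.exp 1 * (16/27)) := by gcongr
      _ = Real.exp 1 * (u^4 * (16/27)) := by ring
      _ ≤ _ := by gcongr
  obtain ⟨k, rfl⟩ : ∃ k, M = k + 1 := ⟨M - 1, by omega⟩
  have h7 : u ^ (2*(k+1)+2) ≤ Real.exp 1 * t^2 * Real.exp (-((k+1 : ℕ) : ℝ) * r) := by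
    calc u ^ (2*(k+1)+2) = u^4 * (u^2)^k := by ring
      _ ≤ u^4 * (Real.exp (-r))^k := by gcongr
      _ = (u^4 * Real.exp r) * Real.exp (-((k+1 : ℕ) : ℝ) * r) := by
        rw [← Real.exp_nat_mul, mul_assoc, ← Real.exp_add]
        congr 2; push_cast; ring
      _ ≤ _ := by gcongr
  have h8 : p * t ≤ (Real.exp 1 * s * Real.exp (-((k+1 : ℕ) : ℝ) * r)) * t := by
    refine (hp.trans h7).trans ?_
    have : Real.exp 1 * t^2 * Real.exp (-((k+1 : ℕ) : ℝ) * r) =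
      (Real.exp 1 * t * Real.exp (-((k+1 : ℕ) : ℝ) * r)) * t := by ring
    rw [this]
    gcongr
  exact le_of_mul_le_mul_right h8 htp

theorem aux_abel (y : ℝ) (J : ℕ → ℝ) (m : ℕ) :
    ∑ l ∈ Finset.range m, y^(2*l+1) * ((if l = 0 then 0 else J (l-1)) - J l)
      + y^(2*m+1) * (if m = 0 then 0 else J (m-1)) =
    ∑ l ∈ Finset.range m, (y^2-1) * y^(2*l+1) * J l := by
  induction m with
  | zero => simp
  | succ n ih =>
    rw [Finset.sum_range_succ, Finset.sum_range_succ, ← ih]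
    simp only [Nat.add_sub_cancel, Nat.succ_ne_zero, if_false]
    ring

theorem aux_sum (y : ℝ) (P : ℕ → ℝ) (m : ℕ) :
    ∑ l ∈ Finset.range m, ((l:ℝ)+1) * (y^(2*l) * P l + y^(2*l+2) * P (l+1)) =
    ∑ l ∈ Finset.range m, (2*(l:ℝ)+1) * y^(2*l) * P l + m * y^(2*m) * P m := by
  induction m with
  | zero => simp
  | succ n ih =>
    rw [Finset.sum_range_succ, Finset.sum_range_succ, ih]
    push_cast
    ring


/-- Escape-probability bound: if `|K_l(t)| ≤ c(l+1)` for `l ≤ M < N′`, then for `t ≥ 0`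
`(d/dt) Σ_{l=M+1}^{N′} P_l(t) ≤ 2ec²(M+1)t·exp(−M e^{−2−4c(1+e)t})`. -/
theorem tail_probability_derivative_bound (N' : ℕ) (hN' : 0 < N')
    (K : ℕ → ℝ → ℝ) (φ : ℕ → ℝ → ℝ)
    (hKcont : ∀ l, Continuous (K l))
    (hKtop : ∀ t : ℝ, K N' t = 0)
    (hODE : ∀ l ≤ N', ∀ t : ℝ, HasDerivAt (φ l)
      ((if l = 0 then 0 else K (l - 1) t * φ (l - 1) t) - K l t * φ (l + 1) t) t)
    (hinit0 : φ 0 0 = 1) (hinit : ∀ l, 0 < l → φ l 0 = 0)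
    (hnorm : ∀ t : ℝ, ∑ l ∈ Finset.range (N' + 1), (φ l t) ^ 2 = 1)
    (M : ℕ) (hMpos : 0 < M) (hMN : M < N') (c : ℝ) (hc : 0 < c)
    (hK : ∀ l ≤ M, ∀ t : ℝ, |K l t| ≤ c * (l + 1)) :
    ∀ t : ℝ, 0 ≤ t →
      deriv (fun τ : ℝ => ∑ l ∈ Finset.Icc (M + 1) N', (φ l τ) ^ 2) t ≤
        2 * Real.exp 1 * c ^ 2 * (M + 1) * t *
          Real.exp (-(M : ℝ) * Real.exp (-2 - 4 * c * (1 + Real.exp 1) * t)) := by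
  intro T hT
  set J : ℕ → ℝ → ℝ := fun l t => 2 * K l t * φ l t * φ (l+1) t with hJ
  have hP : ∀ l ≤ N', ∀ t, HasDerivAt (fun τ => (φ l τ)^2)
      ((if l = 0 then 0 else J (l-1) t) - J l t) t := by
    intro l hl t
    have h := (hODE l hl t).pow 2
    refine h.congr_deriv ?_
    rcases l with _ | l
    · simp [hJ]; ring
    · simp [hJ]; ring
  have hF : ∀ m ≤ N', ∀ t, HasDerivAt (fun τ => ∑ l ∈ Finset.range (m+1), (φ l τ)^2)
      (- J m t) t := by
    intro m
    induction m with
    | zero =>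
      intro _ t
      simpa using hP 0 (Nat.zero_le _) t
    | succ n ih =>
      intro hn t
      have h := (ih (by omega) t).add (hP (n+1) hn t)
      have e : (fun τ => ∑ l ∈ Finset.range (n+1+1), (φ l τ)^2) =
        (fun τ => ∑ l ∈ Finset.range (n+1), (φ l τ)^2) + fun τ => (φ (n+1) τ)^2 := by
        funext τ; simp [Finset.sum_range_succ]
      rw [e]
      refine h.congr_deriv ?_
      simp
      ring
  have htail : ∀ t, ∑ l ∈ Finset.Icc (M+1) N', (φ l t)^2 =
      1 - ∑ l ∈ Finset.range (M+1), (φ l t)^2 := by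
    intro t
    have h := Finset.sum_range_add_sum_Ico (fun l => (φ l t)^2) (show M+1 ≤ N'+1 by omega)
    rw [hnorm t] at h
    have e : Finset.Icc (M+1) N' = Finset.Ico (M+1) (N'+1) := by ext; simp <;> omega
    rw [e]; linarith
  have hder : deriv (fun τ : ℝ => ∑ l ∈ Finset.Icc (M + 1) N', (φ l τ) ^ 2) T = J M T := by
    have h := (hF M hMN.le T).const_sub 1
    simp only [neg_neg] at h
    rw [← h.deriv]; congr 1; funext τ; exact htail τ
  rw [hder]
  rcases hT.eq_or_lt with h0 | hTpos
  · rw [← h0]; simp [hJ, hinit (M+1) (by omega)]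
  set tl : ℝ → ℝ := fun t => 1 - ∑ l ∈ Finset.range (M+1), (φ l t)^2 with htl
  have htlge : ∀ t, (φ (M+1) t)^2 ≤ tl t := by
    intro t
    rw [htl]; simp only []; rw [← htail t]
    exact Finset.single_le_sum (f := fun l => (φ l t)^2) (fun _ _ => sq_nonneg _)
      (by simp; omega)
  have hs : 0 < c * T := by positivity
  set s := c * T with hsdef
  set y : ℝ → ℝ := fun τ => Real.cosh (s + c*τ) / Real.sinh (s + c*τ) with hy
  have hshp : ∀ τ, 0 ≤ τ → 0 < Real.sinh (s + c*τ) := fun τ h =>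
    Real.sinh_pos_iff.2 (by positivity)
  have hyd : ∀ τ, 0 ≤ τ → HasDerivAt y (-c * ((y τ)^2 - 1)) τ := by
    intro τ hτ
    have hl : HasDerivAt (fun τ => s + c*τ) c τ := by
      simpa using ((hasDerivAt_id τ).const_mul c).const_add s
    have h := hl.cosh.div hl.sinh (hshp τ hτ).ne'
    refine h.congr_deriv ?_
    have := hshp τ hτ
    simp only [hy]
    field_simp
    ring
  have hy1 : ∀ τ, 0 ≤ τ → 1 ≤ y τ := by
    intro τ hτ
    simp only [hy]
    rw [le_div_iff₀ (hshp τ hτ), one_mul]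
    exact (Real.sinh_lt_cosh _).le
  set H : ℝ → ℝ := fun τ => ∑ l ∈ Finset.range (M+1), (y τ)^(2*l+1) * (φ l τ)^2
    + (y τ)^(2*(M+1)+1) * tl τ with hH
  have hHd : ∀ τ, 0 ≤ τ → HasDerivAt H
      (∑ l ∈ Finset.range (M+1), (((2*l+1:ℕ):ℝ) * (y τ)^(2*l) * (-c * ((y τ)^2 - 1)) * (φ l τ)^2
        + (y τ)^(2*l+1) * ((if l = 0 then 0 else J (l-1) τ) - J l τ))
       + (((2*(M+1)+1:ℕ):ℝ) * (y τ)^(2*(M+1)) * (-c * ((y τ)^2 - 1)) * tl τ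
        + (y τ)^(2*(M+1)+1) * J M τ)) τ := by
    intro τ hτ
    have hpow : ∀ n : ℕ, HasDerivAt (fun τ => (y τ)^(2*n+1))
        (((2*n+1:ℕ):ℝ) * (y τ)^(2*n) * (-c * ((y τ)^2 - 1))) τ := by
      intro n
      exact (hyd τ hτ).pow (2*n+1)
    have h1 := HasDerivAt.fun_sum (u := Finset.range (M+1)) (fun l hl =>
      (hpow l).mul (hP l (by have := Finset.mem_range.1 hl; omega) τ))
    have htd : HasDerivAt tl (J M τ) τ := by
      have h := (hF M hMN.le τ).const_sub 1
      simpa only [neg_neg] using h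
    exact h1.add ((hpow (M+1)).mul htd)
  have hHneg : ∀ τ, 0 ≤ τ → (∑ l ∈ Finset.range (M+1), (((2*l+1:ℕ):ℝ) * (y τ)^(2*l) * (-c * ((y τ)^2 - 1)) * (φ l τ)^2
        + (y τ)^(2*l+1) * ((if l = 0 then 0 else J (l-1) τ) - J l τ))
       + (((2*(M+1)+1:ℕ):ℝ) * (y τ)^(2*(M+1)) * (-c * ((y τ)^2 - 1)) * tl τ
        + (y τ)^(2*(M+1)+1) * J M τ)) ≤ 0 := by
    intro τ hτ
    have hab := aux_abel (y τ) (fun l => J l τ) (M+1)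
    have hsm := aux_sum (y τ) (fun l => (φ l τ)^2) (M+1)
    simp only [Nat.add_sub_cancel, Nat.succ_ne_zero, if_false] at hab
    have hyy := hy1 τ hτ
    have hD : 0 ≤ (y τ)^2 - 1 := by nlinarith
    have hb : ∑ l ∈ Finset.range (M+1), ((y τ)^2-1) * (y τ)^(2*l+1) * J l τ ≤
        c * ((y τ)^2-1) * ∑ l ∈ Finset.range (M+1), ((l:ℝ)+1) * ((y τ)^(2*l) * (φ l τ)^2 + (y τ)^(2*l+2) * (φ (l+1) τ)^2) := by
      rw [Finset.mul_sum]
      apply Finset.sum_le_sum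
      intro l hl
      have hl' : l ≤ M := by have := Finset.mem_range.1 hl; omega
      have hk := hK l hl' τ
      have h1 : J l τ * y τ ≤ c * (l+1) * ((φ l τ)^2 + (y τ)^2 * (φ (l+1) τ)^2) := by
        calc J l τ * y τ = K l τ * (2 * φ l τ * (y τ * φ (l+1) τ)) := by simp only [hJ]; ring
          _ ≤ |K l τ| * |2 * φ l τ * (y τ * φ (l+1) τ)| := by
            rw [← abs_mul]; exact le_abs_self _
          _ ≤ (c * (l+1)) * ((φ l τ)^2 + (y τ)^2 * (φ (l+1) τ)^2) := by
            gcongr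
            rw [abs_le]
            constructor
            · nlinarith [sq_nonneg (φ l τ + y τ * φ (l+1) τ)]
            · nlinarith [sq_nonneg (φ l τ - y τ * φ (l+1) τ)]
      calc ((y τ)^2-1) * (y τ)^(2*l+1) * J l τ = (((y τ)^2-1) * (y τ)^(2*l)) * (J l τ * y τ) := by ring
        _ ≤ (((y τ)^2-1) * (y τ)^(2*l)) * (c * (l+1) * ((φ l τ)^2 + (y τ)^2 * (φ (l+1) τ)^2)) := by
          gcongr
        _ = _ := by ring
    rw [hsm] at hb
    have e1 : ∑ l ∈ Finset.range (M+1), ((2*l+1:ℕ):ℝ) * (y τ)^(2*l) * (-c * ((y τ)^2 - 1)) * (φ l τ)^2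
        = -(c * ((y τ)^2-1)) * ∑ l ∈ Finset.range (M+1), (2*(l:ℝ)+1) * (y τ)^(2*l) * (φ l τ)^2 := by
      rw [Finset.mul_sum]
      refine Finset.sum_congr rfl fun l _ => ?_
      push_cast; ring
    rw [Finset.sum_add_distrib, e1]
    have e2 : c * ((y τ)^2-1) * (((M+1:ℕ):ℝ) * (y τ)^(2*(M+1)) * (φ (M+1) τ)^2) ≤
       c * ((y τ)^2-1) * (((2*(M+1)+1:ℕ):ℝ) * (y τ)^(2*(M+1)) * tl τ) := by
      have := htlge τ
      gcongr
      omega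
    nlinarith
  have hanti : AntitoneOn H (Set.Ici 0) := by
    apply antitoneOn_of_deriv_nonpos (convex_Ici 0)
    · intro τ hτ; exact (hHd τ hτ).continuousAt.continuousWithinAt
    · intro τ hτ
      rw [interior_Ici] at hτ
      exact (hHd τ (le_of_lt hτ)).differentiableAt.differentiableWithinAt
    · intro τ hτ
      rw [interior_Ici] at hτ
      rw [(hHd τ (le_of_lt hτ)).deriv]
      exact hHneg τ (le_of_lt hτ)
  have hHT : H T ≤ H 0 := hanti (Set.mem_Ici.2 le_rfl) (Set.mem_Ici.2 hT) hT
  have hsum0 : ∀ g : ℕ → ℝ, ∑ l ∈ Finset.range (M+1), g l * (φ l 0)^2 = g 0 := by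
    intro g
    rw [Finset.sum_eq_single 0]
    · simp [hinit0]
    · intro b _ hb; simp [hinit b (by omega)]
    · simp
  have htl0 : tl 0 = 0 := by
    have := hsum0 (fun _ => 1)
    simp only [one_mul] at this
    simp only [htl, this]; ring
  have hH0 : H 0 = y 0 := by
    have := hsum0 (fun l => (y 0)^(2*l+1))
    simp only [hH, this, htl0]; simp
  rw [hH0] at hHT
  have hyT := hy1 T hT
  have hyT0 : 0 < y T := by linarith
  have hy0 : 0 < y 0 := by linarith [hy1 0 le_rfl]
  have htlT : 0 ≤ tl T := le_trans (sq_nonneg _) (htlge T)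
  have hA : (y T)^(2*M+1) * (φ M T)^2 ≤ y 0 := by
    refine le_trans ?_ hHT
    have h1 := Finset.single_le_sum (f := fun l => (y T)^(2*l+1) * (φ l T)^2)
      (s := Finset.range (M+1)) (fun _ _ => by positivity) (Finset.self_mem_range_succ M)
    have h2 : 0 ≤ (y T)^(2*(M+1)+1) * tl T := by positivity
    simp only [hH] at *
    linarith
  have hB : (y T)^(2*(M+1)+1) * (φ (M+1) T)^2 ≤ y 0 := by
    refine le_trans ?_ hHT
    have h1 : 0 ≤ ∑ l ∈ Finset.range (M+1), (y T)^(2*l+1) * (φ l T)^2 :=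
      Finset.sum_nonneg (fun _ _ => by positivity)
    have h2 : (y T)^(2*(M+1)+1) * (φ (M+1) T)^2 ≤ (y T)^(2*(M+1)+1) * tl T := by
      have := htlge T
      gcongr
    simp only [hH] at *
    linarith
  have hAB : (y T)^(2*M+2) * |φ M T * φ (M+1) T| ≤ y 0 := by
    refine le_of_sq_le_sq ?_ hy0.le
    calc ((y T)^(2*M+2) * |φ M T * φ (M+1) T|)^2
        = ((y T)^(2*M+1) * (φ M T)^2) * ((y T)^(2*(M+1)+1) * (φ (M+1) T)^2) := by
          rw [mul_pow, sq_abs]; ring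
      _ ≤ y 0 * y 0 := by gcongr
      _ = _ := by ring
  have hfin := aux_num s (Real.exp (-2 - 4 * c * (1 + Real.exp 1) * T)) (y 0)⁻¹ (y T)⁻¹
    (|φ M T * φ (M+1) T|) M hMpos hs ?_ ?_ ?_ ?_ ?_
  · have hk := hK M le_rfl T
    calc J M T = K M T * (2 * (φ M T * φ (M+1) T)) := by simp only [hJ]; ring
      _ ≤ |K M T| * (2 * |φ M T * φ (M+1) T|) := by
        refine (le_abs_self _).trans ?_
        rw [abs_mul, abs_mul, abs_two]
      _ ≤ (c * (M+1)) * (2 * (Real.exp 1 * s * Real.exp (-(M:ℝ) * Real.exp (-2 - 4 * c * (1 + Real.exp 1) * T)))) := by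
        gcongr
      _ = _ := by rw [hsdef]; ring
  · have h1 : Real.exp (-2 - 4 * c * (1 + Real.exp 1) * T) ≤ Real.exp (-2) := by
      apply Real.exp_le_exp.2
      have : 0 ≤ 4 * c * (1 + Real.exp 1) * T := by positivity
      linarith
    refine h1.trans ?_
    rw [show (-2:ℝ) = -(1+1) by norm_num, Real.exp_neg, Real.exp_add, ← one_div]
    apply one_div_le_one_div_of_le (by norm_num)
    have := Real.exp_one_gt_d9
    nlinarith
  · apply Real.exp_le_exp.2
    have : 0 ≤ c * T * Real.exp 1 := by positivity
    rw [hsdef]; nlinarith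
  · simp [hy]
  · simp only [hy, inv_div]
    rw [show s + c * T = 2 * s by rw [hsdef]; ring]
  · rw [← div_eq_mul_inv, div_le_iff₀ hy0, inv_pow, inv_mul_eq_div, le_div_iff₀ (by positivity)]
    linarith
end

section
/- For every positive integer n and every nonnegative integer l, the inequality n·(l+1)^{n−1} < e·lⁿ + (e·n)ⁿ holds. -/
/-- For every positive integer `n` and nonnegative integer `l`,
`n(l+1)^{n−1} < e·lⁿ + (en)ⁿ`. -/
theorem poly_exp_inequality (n : ℕ) (hn : 0 < n) (l : ℕ) :
    (n : ℝ) * ((l : ℝ) + 1) ^ (n - 1) <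
      Real.exp 1 * (l : ℝ) ^ n + (Real.exp 1 * n) ^ n := by
  obtain ⟨m, rfl⟩ : ∃ m, n = m + 1 := ⟨n - 1, by omega⟩
  have he : (1 : ℝ) < Real.exp 1 := by
    have := Real.add_one_lt_exp (x := 1) one_ne_zero
    linarith
  have hN : (0 : ℝ) < ((m + 1 : ℕ) : ℝ) := by positivity
  rw [Nat.add_sub_cancel]
  rcases Nat.lt_or_ge l (m + 1) with h | h
  · have h1 : (l : ℝ) + 1 ≤ ((m + 1 : ℕ) : ℝ) := by exact_mod_cast h
    have h2 : ((l : ℝ) + 1) ^ m ≤ ((m + 1 : ℕ) : ℝ) ^ m := by gcongr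
    have h3 : ((m + 1 : ℕ) : ℝ) ^ (m + 1) < (Real.exp 1 * ((m + 1 : ℕ) : ℝ)) ^ (m + 1) := by
      apply pow_lt_pow_left₀ _ hN.le (by omega)
      nlinarith
    have h4 : 0 ≤ Real.exp 1 * (l : ℝ) ^ (m + 1) := by positivity
    have h5 := mul_le_mul_of_nonneg_left h2 hN.le
    have h6 := pow_succ' ((m + 1 : ℕ) : ℝ) m
    linarith
  · have hl : (0 : ℝ) < l := by exact_mod_cast (by omega : 0 < l)
    have hle : ((m + 1 : ℕ) : ℝ) ≤ l := by exact_mod_cast h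
    have h1 : (l : ℝ) + 1 ≤ l * Real.exp (1 / l) := by
      have := mul_le_mul_of_nonneg_left (Real.add_one_le_exp (1 / (l : ℝ))) hl.le
      have h' : (l : ℝ) * (1 / l + 1) = l + 1 := by field_simp; ring
      linarith
    have h2 : ((l : ℝ) + 1) ^ m ≤ (l : ℝ) ^ m * Real.exp 1 := by
      calc ((l : ℝ) + 1) ^ m ≤ (l * Real.exp (1 / l)) ^ m := by gcongr
        _ = (l : ℝ) ^ m * Real.exp (m * (1 / l)) := by rw [mul_pow, ← Real.exp_nat_mul]
        _ ≤ (l : ℝ) ^ m * Real.exp 1 := by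
          gcongr
          rw [mul_one_div, div_le_one hl]
          push_cast at hle
          linarith
    have h3 : 0 < (Real.exp 1 * ((m + 1 : ℕ) : ℝ)) ^ (m + 1) := by positivity
    have h4 := mul_le_mul hle h2 (by positivity) hl.le
    have h5 : (l : ℝ) * ((l : ℝ) ^ m * Real.exp 1) = Real.exp 1 * (l : ℝ) ^ (m + 1) := by ring
    linarith
end

section
/- Fix c > 0 and define φ_l(t) := tanh(ct)^l · sech(ct) for each integer l ≥ 0 and each t ∈ ℝ. Then: (i) for every l ≥ 0 and every t, φ_l′(t) = c·l·φ_{l−1}(t) − c·(l+1)·φ_{l+1}(t) (where the first term is absent when l = 0); (ii) φ_0(0) = 1 and φ_l(0) = 0 for l ≥ 1; and (iii) for every t, Σ_{l=0}^{∞} φ_l(t)² = Σ_{l=0}^{∞} tanh(ct)^{2l}·sech²(ct) = 1. In other words, the continuous-time quantum walk on the half-line {0, 1, 2, …} with transition rates K_l(t) = c(l+1), started at site 0, has site-occupation probabilities P_l(t) = tanh(ct)^{2l}·sech²(ct). -/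
/-- The wave function `φ_l(t) = tanh(ct)^l · sech(ct)` of the "optimal" quantum walk. -/
noncomputable def phiOpt (c : ℝ) (l : ℕ) (t : ℝ) : ℝ :=
  Real.tanh (c * t) ^ l / Real.cosh (c * t)

/-- The continuous-time quantum walk on the half-line with rates `K_l(t) = c(l+1)`, started at
site 0, is solved by `φ_l(t) = tanh(ct)^l·sech(ct)`: it satisfies the walk ODEs, the initial
condition, stays normalized, and has site-occupation probabilities
`P_l(t) = tanh(ct)^{2l}·sech²(ct)`. -/
theorem optimal_quantum_walk (c : ℝ) (hc : 0 < c) :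
    (∀ (l : ℕ) (t : ℝ), HasDerivAt (phiOpt c l)
        (c * l * phiOpt c (l - 1) t - c * (l + 1) * phiOpt c (l + 1) t) t) ∧
    (phiOpt c 0 0 = 1 ∧ ∀ l : ℕ, 1 ≤ l → phiOpt c l 0 = 0) ∧
    (∀ (l : ℕ) (t : ℝ),
        (phiOpt c l t) ^ 2 = Real.tanh (c * t) ^ (2 * l) * (1 / Real.cosh (c * t)) ^ 2) ∧
    (∀ t : ℝ, ∑' l : ℕ, (phiOpt c l t) ^ 2 = 1) ∧
    (∀ t : ℝ, ∑' l : ℕ, Real.tanh (c * t) ^ (2 * l) * (1 / Real.cosh (c * t)) ^ 2 = 1) := by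
  have hsq : ∀ (l : ℕ) (t : ℝ),
      (phiOpt c l t) ^ 2 = Real.tanh (c * t) ^ (2 * l) * (1 / Real.cosh (c * t)) ^ 2 := by
    intro l t
    unfold phiOpt
    rw [div_pow, ← pow_mul, mul_comm l 2, one_div, inv_pow, div_eq_mul_inv]
  have hid : ∀ x : ℝ, (1 / Real.cosh x) ^ 2 = 1 - Real.tanh x ^ 2 := by
    intro x
    have h := (Real.cosh_pos x).ne'
    have h2 := Real.cosh_sq x
    rw [Real.tanh_eq_sinh_div_cosh]
    field_simp
    linarith
  have hsum : ∀ t : ℝ,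
      ∑' l : ℕ, Real.tanh (c * t) ^ (2 * l) * (1 / Real.cosh (c * t)) ^ 2 = 1 := by
    intro t
    have hp : 0 < (1 / Real.cosh (c * t)) ^ 2 := by
      have := Real.cosh_pos (c * t)
      positivity
    have h1 := hid (c * t)
    simp_rw [pow_mul]
    rw [tsum_mul_right, tsum_geometric_of_lt_one (sq_nonneg _) (by linarith), ← h1]
    exact inv_mul_cancel₀ hp.ne'
  refine ⟨?_, ⟨by simp [phiOpt], ?_⟩, hsq, ?_, hsum⟩
  · intro l t
    have hC := (Real.cosh_pos (c * t)).ne'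
    have hlin : HasDerivAt (fun t : ℝ => c * t) c t := by
      simpa using (hasDerivAt_id t).const_mul c
    have hc' : HasDerivAt (fun t : ℝ => Real.cosh (c * t)) (Real.sinh (c * t) * c) t := hlin.cosh
    have hs' : HasDerivAt (fun t : ℝ => Real.sinh (c * t)) (Real.cosh (c * t) * c) t := hlin.sinh
    have hT : HasDerivAt (fun t : ℝ => Real.tanh (c * t))
        (c * (1 - Real.tanh (c * t) ^ 2)) t := by
      have h := hs'.div hc' hC
      have he : (fun t : ℝ => Real.tanh (c * t)) =
          (fun t : ℝ => Real.sinh (c * t)) / (fun t : ℝ => Real.cosh (c * t)) := by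
        funext x
        simp [Real.tanh_eq_sinh_div_cosh]
      rw [he]
      refine HasDerivAt.congr_deriv h (Eq.symm ?_)
      rw [Real.tanh_eq_sinh_div_cosh]
      field_simp
    have h := (hT.pow l).div hc' hC
    have hf : phiOpt c l =
        ((fun t : ℝ => Real.tanh (c * t)) ^ l) / (fun t : ℝ => Real.cosh (c * t)) := by
      funext x
      simp [phiOpt]
    rw [hf]
    refine HasDerivAt.congr_deriv h (Eq.symm ?_)
    have hS : Real.sinh (c * t) = Real.tanh (c * t) * Real.cosh (c * t) := by
      rw [Real.tanh_eq_sinh_div_cosh]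
      field_simp
    simp only [phiOpt, Pi.pow_apply]
    rw [hS]
    generalize Real.tanh (c * t) = T
    generalize Real.cosh (c * t) = C at hC
    cases l with
    | zero =>
      simp
      field_simp
    | succ n =>
      simp only [Nat.add_sub_cancel]
      push_cast
      field_simp
      ring
  · intro l hl
    have : l ≠ 0 := by omega
    simp [phiOpt, this]
  · intro t
    simp_rw [hsq]
    exact hsum t
end
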